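/- Let m be a multicore. Suppose that m = m_0, m_1, …, m_v is a sequence of multicores such that m_{t+1} = s^{jk}_{il}(m_t) for some i,l ∈ {0,…,e−1} and j,k ∈ {1,…,r}, and w(m_{t+1}) < w(m_t), for all t = 0,…,v−1. Let h > 0 be such that w(m) = w(m_v) + hr. Fix ī ∈ ℤ/eℤ. Then d_ī(m) ≥ d_ī(m_v) − h. -/

import Mathlib

/-!
Combinatorial framework for multipartitions, residues, β-sets, abacus levels,
weights, hubs, core blocks and Scopes-type moves, following Fayers and the paper.
Rows and columns of Young diagrams are indexed from 0, so the node in row `b`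
and column `c` (0-based) of component `j` has residue `a j + c - b` mod `e`.
-/

open scoped Classical

namespace AK

/-- A partition, given by its (antitone, finitely supported) sequence of parts,
rows indexed from `0`. -/
structure PartitionFun : Type where
  part : ℕ → ℕ
  antitone : Antitone part
  finite_support : ∃ N, ∀ b, N ≤ b → part b = 0

/-- The node in row `b`, column `c` (0-based) belongs to the Young diagram. -/
def PartitionFun.InDiag (lam : PartitionFun) (b c : ℕ) : Prop := c < lam.part b

/-- The node `(b,c)` is removable: deleting it leaves the diagram of a partition. -/
def PartitionFun.Removable (lam : PartitionFun) (b c : ℕ) : Prop :=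
  lam.part b = c + 1 ∧ lam.part (b + 1) ≤ c

/-- The node `(b,c)` is addable: adjoining it gives the diagram of a partition. -/
def PartitionFun.Addable (lam : PartitionFun) (b c : ℕ) : Prop :=
  lam.part b = c ∧ (b = 0 ∨ lam.part b < lam.part (b - 1))

/-- An `r`-multipartition. -/
abbrev Multipartition (r : ℕ) := Fin r → PartitionFun

/-- Nodes: `(b, c, j)` with row `b`, column `c`, component `j`. -/
abbrev Node (r : ℕ) := ℕ × ℕ × Fin r

/-- The Young diagram of a multipartition, as a set of nodes. -/
def diag {r : ℕ} (lam : Multipartition r) : Set (Node r) :=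
  {x | (lam x.2.2).InDiag x.1 x.2.1}

/-- The size `n` of a multipartition of `n`. -/
noncomputable def msize {r : ℕ} (lam : Multipartition r) : ℕ :=
  Set.ncard (diag lam)

/-- `c_i(λ)`: the number of nodes of residue `i` (mod `e`). -/
noncomputable def nodeCount {r : ℕ} (e : ℕ) (a : Fin r → ℤ) (lam : Multipartition r)
    (i : ℤ) : ℕ :=
  Set.ncard {x : Node r | (lam x.2.2).InDiag x.1 x.2.1 ∧
    (a x.2.2 + (x.2.1 : ℤ) - (x.1 : ℤ)) % (e : ℤ) = i % e}

/-- Number of removable nodes of residue `i` in component `j`. -/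
noncomputable def removableCount {r : ℕ} (e : ℕ) (a : Fin r → ℤ) (lam : Multipartition r)
    (i : ℤ) (j : Fin r) : ℕ :=
  Set.ncard {p : ℕ × ℕ | (lam j).Removable p.1 p.2 ∧
    (a j + (p.2 : ℤ) - (p.1 : ℤ)) % (e : ℤ) = i % e}

/-- Number of addable nodes of residue `i` in component `j`. -/
noncomputable def addableCount {r : ℕ} (e : ℕ) (a : Fin r → ℤ) (lam : Multipartition r)
    (i : ℤ) (j : Fin r) : ℕ :=
  Set.ncard {p : ℕ × ℕ | (lam j).Addable p.1 p.2 ∧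
    (a j + (p.2 : ℤ) - (p.1 : ℤ)) % (e : ℤ) = i % e}

/-- `δ^j_i(λ)` = (removable `i`-nodes of component `j`) − (addable `i`-nodes of component `j`). -/
noncomputable def delta {r : ℕ} (e : ℕ) (a : Fin r → ℤ) (lam : Multipartition r)
    (i : ℤ) (j : Fin r) : ℤ :=
  (removableCount e a lam i j : ℤ) - (addableCount e a lam i j : ℤ)

/-- The hub `δ_i(λ) = Σ_j δ^j_i(λ)`. -/
noncomputable def hub {r : ℕ} (e : ℕ) (a : Fin r → ℤ) (lam : Multipartition r) (i : ℤ) : ℤ :=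
  ∑ j : Fin r, delta e a lam i j

/-- Two multipartitions have the same hub. -/
def SameHub {r : ℕ} (e : ℕ) (a : Fin r → ℤ) (lam mu : Multipartition r) : Prop :=
  ∀ i : ℤ, hub e a lam i = hub e a mu i

/-- `d_i(m) = min { δ^j_i(m) : 1 ≤ j ≤ r }`. -/
noncomputable def dmin {r : ℕ} (e : ℕ) (a : Fin r → ℤ) (lam : Multipartition r) (i : ℤ) : ℤ :=
  sInf {x : ℤ | ∃ j : Fin r, delta e a lam i j = x}

/-- The weight `w(λ) = Σ_j c_{a_j}(λ) − (1/2) Σ_{i∈ℤ/eℤ} (c_i(λ) − c_{i+1}(λ))²`. -/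
noncomputable def weight {r : ℕ} (e : ℕ) (a : Fin r → ℤ) (lam : Multipartition r) : ℚ :=
  (∑ j : Fin r, (nodeCount e a lam (a j) : ℚ)) -
    (1 / 2 : ℚ) * ∑ i ∈ Finset.range e,
      ((nodeCount e a lam (i : ℤ) : ℚ) - (nodeCount e a lam ((i : ℤ) + 1) : ℚ)) ^ 2

/-- The β-set `B^j = {λ_b + a_j − b : b ≥ 1}` (here with rows indexed from 0). -/
def betaSet (aj : ℤ) (lam : PartitionFun) : Set ℤ :=
  {x | ∃ b : ℕ, x = (lam.part b : ℤ) + aj - ((b : ℤ) + 1)}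

/-- A partition is an `e`-core: `β ∈ B` implies `β − e ∈ B`. -/
def IsECore (e : ℕ) (aj : ℤ) (lam : PartitionFun) : Prop :=
  ∀ x ∈ betaSet aj lam, x - (e : ℤ) ∈ betaSet aj lam

/-- A multicore: all components are `e`-cores. -/
def IsMulticore {r : ℕ} (e : ℕ) (a : Fin r → ℤ) (lam : Multipartition r) : Prop :=
  ∀ j, IsECore e (a j) (lam j)

/-- `ℓ^a_{ij}(λ)`: the level of the lowest bead on runner `i`, i.e. the largest `x`
with `x·e + i` in the β-set. -/
noncomputable def level (e : ℕ) (aj : ℤ) (lam : PartitionFun) (i : ℕ) : ℤ :=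
  sSup {x : ℤ | x * (e : ℤ) + (i : ℤ) ∈ betaSet aj lam}

/-- `γ^{jk}_i(λ) = ℓ^a_{ij}(λ) − ℓ^a_{ik}(λ)`. -/
noncomputable def gamma {r : ℕ} (e : ℕ) (a : Fin r → ℤ) (lam : Multipartition r)
    (i : ℕ) (j k : Fin r) : ℤ :=
  level e (a j) (lam j) i - level e (a k) (lam k) i

/-- `γ^{jk}_{il}(λ) = γ^{jk}_i(λ) − γ^{jk}_l(λ)`. -/
noncomputable def gammaD {r : ℕ} (e : ℕ) (a : Fin r → ℤ) (lam : Multipartition r)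
    (i l : ℕ) (j k : Fin r) : ℤ :=
  gamma e a lam i j k - gamma e a lam l j k

/-- Move a bead from runner `i` to runner `l` in the β-set `S`: replace the largest
element of `S` congruent to `i` mod `e` by the smallest integer congruent to `l`
mod `e` not in `S`. -/
noncomputable def moveBead (e : ℕ) (i l : ℕ) (S : Set ℤ) : Set ℤ :=
  insert (sInf {x : ℤ | x % (e : ℤ) = (l : ℤ) % e ∧ x ∉ S})
    (S \ {sSup {x : ℤ | x % (e : ℤ) = (i : ℤ) % e ∧ x ∈ S}})

/-- The effect of `s^{jk}_{il}` on the tuple of β-sets: move a bead from runner `i`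
to runner `l` in component `j`, and from runner `l` to runner `i` in component `k`. -/
noncomputable def swapSets {r : ℕ} (e i l : ℕ) (j k : Fin r) (S : Fin r → Set ℤ) :
    Fin r → Set ℤ :=
  Function.update (Function.update S j (moveBead e i l (S j))) k
    (moveBead e l i (Function.update S j (moveBead e i l (S j)) k))

/-- `m' = s^{jk}_{il}(m)`, expressed via β-sets. -/
def IsSwap {r : ℕ} (e : ℕ) (a : Fin r → ℤ) (i l : ℕ) (j k : Fin r)
    (m m' : Multipartition r) : Prop :=
  ∀ j', betaSet (a j') (m' j') = swapSets e i l j k (fun t => betaSet (a t) (m t)) j'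

/-- `λ` lies in a core block: its weight is minimal among the weights of all
multipartitions with the same hub. -/
def MinimalWeight {r : ℕ} (e : ℕ) (a : Fin r → ℤ) (lam : Multipartition r) : Prop :=
  ∀ mu : Multipartition r, SameHub e a lam mu → weight e a lam ≤ weight e a mu

/-- `(b_0,…,b_{e−1})` is a base tuple for `mu` with respect to the multicharge `a'`
(congruent to `a` componentwise mod `e`): each `ℓ^{a'}_{ij}(mu)` is `b i` or `b i + 1`. -/
def IsBaseTuple {r : ℕ} (e : ℕ) (a : Fin r → ℤ) (mu : Multipartition r)
    (a' : Fin r → ℤ) (b : ℕ → ℤ) : Prop :=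
  (∀ j, (e : ℤ) ∣ (a' j - a j)) ∧
    ∀ i < e, ∀ j, level e (a' j) (mu j) i = b i ∨ level e (a' j) (mu j) i = b i + 1

/-- `K_i(C)` for the core block of `mu`: among all base tuples (over all admissible
multicharges), take `b i` maximal and then `b (i−1)` minimal, and set
`K_i = b_i − b_{i−1} − 1` for `i ≠ 0`, `K_0 = b_0 − b_{e−1} − 2`. -/
noncomputable def Kconst {r : ℕ} (e : ℕ) (a : Fin r → ℤ) (mu : Multipartition r)
    (i : ℕ) : ℤ :=
  let Bi : ℤ := sSup {x : ℤ | ∃ a' bt, IsBaseTuple e a mu a' bt ∧ bt i = x}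
  let iprev : ℕ := if i = 0 then e - 1 else i - 1
  let Bp : ℤ := sInf {x : ℤ | ∃ a' bt, IsBaseTuple e a mu a' bt ∧ bt i = Bi ∧ bt iprev = x}
  Bi - Bp - (if i = 0 then 2 else 1)

/-- The map `φ_i : ℤ → ℤ`. -/
def phiMap (e i : ℕ) (x : ℤ) : ℤ :=
  if x % (e : ℤ) = ((i : ℤ) - 1) % e then x + 1
  else if x % (e : ℤ) = (i : ℤ) % e then x - 1
  else x

/-- Lexicographic order on multipartitions: `λ > μ`. -/
def lexGT {r : ℕ} (lam mu : Multipartition r) : Prop :=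
  ∃ j : Fin r, (∀ j' < j, (lam j').part = (mu j').part) ∧
    ∃ i : ℕ, (∀ i' < i, (lam j).part i' = (mu j).part i') ∧
      (mu j).part i < (lam j).part i

/-- `x` is above `y`: `j < j'` or (`j = j'` and `b < b'`). -/
def NodeAbove {r : ℕ} (x y : Node r) : Prop :=
  x.2.2 < y.2.2 ∨ (x.2.2 = y.2.2 ∧ x.1 < y.1)

/-- The order on nodes: `x < y` iff `y` is above `x`. -/
def NodeLT {r : ℕ} (x y : Node r) : Prop := NodeAbove y x

/-- `N_A(λ)` = (addable `i`-nodes of `λ` below `A`) − (removable `i`-nodes of `λ` below `A`). -/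
noncomputable def Nfac {r : ℕ} (e : ℕ) (a : Fin r → ℤ) (lam : Multipartition r)
    (i : ℤ) (A : Node r) : ℤ :=
  (Set.ncard {y : Node r | (lam y.2.2).Addable y.1 y.2.1 ∧
      (a y.2.2 + (y.2.1 : ℤ) - (y.1 : ℤ)) % (e : ℤ) = i % e ∧ NodeAbove A y} : ℤ) -
  (Set.ncard {y : Node r | (lam y.2.2).Removable y.1 y.2.1 ∧
      (a y.2.2 + (y.2.1 : ℤ) - (y.1 : ℤ)) % (e : ℤ) = i % e ∧ NodeAbove A y} : ℤ)

/-- `lam` is obtained from `mu` by adding one `e`-rim hook to some component: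
on β-sets, some `β ∈ B^j` with `β + e ∉ B^j` is replaced by `β + e`. -/
def AddRimHook {r : ℕ} (e : ℕ) (a : Fin r → ℤ) (mu lam : Multipartition r) : Prop :=
  ∃ (j : Fin r) (β : ℤ), β ∈ betaSet (a j) (mu j) ∧ β + (e : ℤ) ∉ betaSet (a j) (mu j) ∧
    betaSet (a j) (lam j) = insert (β + (e : ℤ)) (betaSet (a j) (mu j) \ {β}) ∧
    ∀ j' ≠ j, betaSet (a j') (lam j') = betaSet (a j') (mu j')

/-- The number of inversions (length) of a permutation of `Fin d`. -/
noncomputable def permLength (d : ℕ) (σ : Equiv.Perm (Fin d)) : ℕ :=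
  (Finset.univ.filter (fun p : Fin d × Fin d => p.1 < p.2 ∧ σ p.2 < σ p.1)).card

/-!
A multicore is recorded by the levels `L j t` of the last beads on its runners, and everything in
sight is a function of these: `δ^j_s = L j s - L j (s - 1)`, and a swap `s^{jk}_{il}` with `j ≠ k`
lowers the weight by `r (γ - 2)`, where `γ = γ^{jk}_{il}` (with `j = k` it changes nothing). If the
weight drops, then `γ ≥ 3`, while each `δ^j_s` grows by at most `2`. Growth by `2` happens only when
`l ≡ s` and `i ≡ s - 1`, and then `δ^k_s = δ^j_s + γ` falls to `δ^j_s + (γ - 2)`. Either way `d_s`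
grows by at most `γ - 2`, so `w + r d_s` never increases along the sequence.
-/

section BetaSet

open Filter

/-- The element of the β-set contributed by row `b`, so that the β-set is the range of `bead`. -/
def bead (aj : ℤ) (lam : PartitionFun) (b : ℕ) : ℤ := (lam.part b : ℤ) + aj - ((b : ℤ) + 1)

variable (aj : ℤ) (lam : PartitionFun)

lemma range_bead : Set.range (bead aj lam) = betaSet aj lam := by
  ext x
  exact exists_congr fun b => eq_comm

lemma bead_mem_betaSet (b : ℕ) : bead aj lam b ∈ betaSet aj lam := ⟨b, rfl⟩

lemma bead_strictAnti : StrictAnti (bead aj lam) := by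
  intro b c hbc
  have := lam.antitone hbc.le
  unfold bead
  omega

lemma betaSet_injective : Function.Injective (betaSet aj) := by
  intro lam mu h
  rw [← range_bead, ← range_bead] at h
  have hbead : OrderDual.toDual ∘ bead aj lam = OrderDual.toDual ∘ bead aj mu :=
    ((bead_strictAnti aj lam).dual_right.range_inj (bead_strictAnti aj mu).dual_right).1 <| by
      rw [Set.range_comp, Set.range_comp, h]
  have hpart : lam.part = mu.part := by
    funext b
    have : bead aj lam b = bead aj mu b := congrFun hbead b
    unfold bead at this
    omega
  cases lam
  cases mu
  congr

lemma PartitionFun.eventually_forall_part_eq_zero :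
    ∀ᶠ K : ℕ in atTop, ∀ b, K ≤ b → lam.part b = 0 := by
  obtain ⟨N, hN⟩ := lam.finite_support
  filter_upwards [eventually_ge_atTop N] with K hK b hb
  exact hN b (hK.trans hb)

lemma eventually_mem_betaSet : ∀ᶠ x in atBot, x ∈ betaSet aj lam := by
  obtain ⟨N, hN⟩ := lam.finite_support
  filter_upwards [eventually_lt_atBot (aj - N)] with x hx
  refine ⟨(aj - 1 - x).toNat, ?_⟩
  rw [hN _ (by omega)]
  omega

lemma eventually_notMem_betaSet : ∀ᶠ x in atTop, x ∉ betaSet aj lam := by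
  filter_upwards [eventually_gt_atTop (bead aj lam 0)] with x hx hmem
  rw [← range_bead] at hmem
  obtain ⟨b, rfl⟩ := hmem
  exact hx.not_ge ((bead_strictAnti aj lam).antitone (Nat.zero_le b))

variable {aj lam}

lemma bead_sub_one_mem_betaSet_iff {b : ℕ} :
    bead aj lam b - 1 ∈ betaSet aj lam ↔ lam.part (b + 1) = lam.part b := by
  rw [← range_bead]
  constructor
  · rintro ⟨b', hb'⟩
    have hlt : b < b' := (bead_strictAnti aj lam).lt_iff_gt.1 (by omega)
    have := (bead_strictAnti aj lam).antitone (Nat.add_one_le_of_lt hlt)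
    have := lam.antitone (Nat.le_add_right b 1)
    unfold bead at *
    push_cast at *
    omega
  · intro h
    refine ⟨b + 1, ?_⟩
    unfold bead
    rw [h]
    push_cast
    ring

lemma bead_add_one_mem_betaSet_iff {b : ℕ} :
    bead aj lam b + 1 ∈ betaSet aj lam ↔ b ≠ 0 ∧ lam.part (b - 1) = lam.part b := by
  cases b with
  | zero =>
    suffices bead aj lam 0 + 1 ∉ betaSet aj lam by simpa
    rw [← range_bead]
    rintro ⟨b, hb⟩
    have := (bead_strictAnti aj lam).antitone b.zero_le
    omega
  | succ b =>
    rw [← range_bead]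
    constructor
    · rintro ⟨b', hb'⟩
      have hlt : b' < b + 1 := (bead_strictAnti aj lam).lt_iff_gt.1 (by omega)
      have := (bead_strictAnti aj lam).antitone (Nat.le_of_lt_succ hlt)
      have := lam.antitone (Nat.le_add_right b 1)
      unfold bead at *
      push_cast at *
      exact ⟨b.succ_ne_zero, by omega⟩
    · rintro ⟨-, h⟩
      refine ⟨b, ?_⟩
      unfold bead
      rw [← h, Nat.add_sub_cancel]
      push_cast
      ring

/-- The content `aj + c - b` of the node in row `b` and column `c`; its class modulo `e` is the
residue of the node. -/
def content (aj : ℤ) (p : ℕ × ℕ) : ℤ := aj + (p.2 : ℤ) - (p.1 : ℤ)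

lemma content_eq_bead_of_removable {p : ℕ × ℕ} (hp : lam.Removable p.1 p.2) :
    content aj p = bead aj lam p.1 := by
  unfold content bead
  rw [hp.1]
  push_cast
  ring

lemma content_eq_bead_add_one_of_addable {p : ℕ × ℕ} (hp : lam.Addable p.1 p.2) :
    content aj p = bead aj lam p.1 + 1 := by
  unfold content bead
  rw [hp.1]
  ring

variable (aj lam)

lemma injOn_content_removable : Set.InjOn (content aj) {p | lam.Removable p.1 p.2} := by
  intro p hp q hq h
  rw [content_eq_bead_of_removable hp, content_eq_bead_of_removable hq] at h
  have hrow : p.1 = q.1 := (bead_strictAnti aj lam).injective h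
  refine Prod.ext hrow (Nat.succ_injective ?_)
  exact hp.1.symm.trans ((congrArg lam.part hrow).trans hq.1)

lemma injOn_content_addable : Set.InjOn (content aj) {p | lam.Addable p.1 p.2} := by
  intro p hp q hq h
  rw [content_eq_bead_add_one_of_addable hp, content_eq_bead_add_one_of_addable hq] at h
  have hrow : p.1 = q.1 := (bead_strictAnti aj lam).injective (add_right_cancel h)
  exact Prod.ext hrow (hp.1.symm.trans ((congrArg lam.part hrow).trans hq.1))

lemma image_content_removable :
    content aj '' {p | lam.Removable p.1 p.2} =
      {x | x ∈ betaSet aj lam ∧ x - 1 ∉ betaSet aj lam} := by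
  ext x
  constructor
  · rintro ⟨p, hp, rfl⟩
    rw [content_eq_bead_of_removable hp]
    refine ⟨bead_mem_betaSet aj lam p.1, ?_⟩
    rw [bead_sub_one_mem_betaSet_iff, hp.1]
    exact (Nat.lt_succ_of_le hp.2).ne
  · rintro ⟨⟨b, rfl⟩, hb⟩
    have hlt : lam.part (b + 1) < lam.part b :=
      (lam.antitone (Nat.le_add_right b 1)).lt_of_ne (mt bead_sub_one_mem_betaSet_iff.2 hb)
    have hp : lam.Removable b (lam.part b - 1) := ⟨by omega, by omega⟩
    exact ⟨(b, lam.part b - 1), hp, content_eq_bead_of_removable (p := (b, _)) hp⟩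

lemma image_content_addable :
    content aj '' {p | lam.Addable p.1 p.2} =
      {x | x - 1 ∈ betaSet aj lam ∧ x ∉ betaSet aj lam} := by
  ext x
  constructor
  · rintro ⟨p, hp, rfl⟩
    rw [content_eq_bead_add_one_of_addable hp]
    refine ⟨by simpa using bead_mem_betaSet aj lam p.1, ?_⟩
    rw [bead_add_one_mem_betaSet_iff]
    rintro ⟨hne, heq⟩
    exact hp.2.elim hne fun hlt => hlt.ne' heq
  · rintro ⟨⟨b, hb⟩, hx⟩
    obtain rfl : x = bead aj lam b + 1 := by unfold bead; omega
    rw [bead_add_one_mem_betaSet_iff] at hx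
    have hp : lam.Addable b (lam.part b) := by
      refine ⟨rfl, or_iff_not_imp_left.2 fun hne => ?_⟩
      exact (lam.antitone b.pred_le).lt_of_ne fun h => hx ⟨hne, h.symm⟩
    exact ⟨(b, lam.part b), hp, content_eq_bead_add_one_of_addable (p := (b, _)) hp⟩

end BetaSet

section Levels

open Filter

/-- Every runner of the `e`-runner abacus display of `B` is flush, the last bead of the runner
through `t` being at `L t * e + t`. Indexing runners by all integers instead of `{0, …, e - 1}`,
with `L (t + e) = L t - 1`, makes `t - 1` the left neighbour of `t` also for `t = 0`. -/
def HasLevels (e : ℕ) (B : Set ℤ) (L : ℤ → ℤ) : Prop :=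
  ∀ x t : ℤ, x * (e : ℤ) + t ∈ B ↔ x ≤ L t

/-- The indicator function of the runner through `i`, which is what a bead move subtracts from or
adds to the levels. -/
def runnerIndicator (e : ℕ) (i t : ℤ) : ℤ := if t ≡ i [ZMOD e] then 1 else 0

variable {e : ℕ} {B : Set ℤ} {L : ℤ → ℤ}

lemma IsECore.mem_of_le {aj : ℤ} {lam : PartitionFun} (hcore : IsECore e aj lam) {x y t : ℤ}
    (hy : y * (e : ℤ) + t ∈ betaSet aj lam) (hxy : x ≤ y) : x * (e : ℤ) + t ∈ betaSet aj lam := by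
  refine Int.leInductionDown (motive := fun x _ => x * (e : ℤ) + t ∈ betaSet aj lam) hy
    (fun z _ hz => ?_) x hxy
  have := hcore _ hz
  rwa [show z * (e : ℤ) + t - e = (z - 1) * e + t by ring] at this

lemma exists_hasLevels (he : 0 < e) {aj : ℤ} {lam : PartitionFun} (hcore : IsECore e aj lam) :
    ∃ L, HasLevels e (betaSet aj lam) L := by
  suffices ∀ t : ℤ, ∃ l : ℤ, ∀ x : ℤ, x * (e : ℤ) + t ∈ betaSet aj lam ↔ x ≤ l by
    choose L hL using this
    exact ⟨L, fun x t => hL t x⟩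
  intro t
  have he' : (0 : ℤ) < e := by exact_mod_cast he
  have hbot : Tendsto (fun x : ℤ => x * (e : ℤ) + t) atBot atBot :=
    tendsto_atBot_add_const_right _ _ (tendsto_id.atBot_mul_const' he')
  have htop : Tendsto (fun x : ℤ => x * (e : ℤ) + t) atTop atTop :=
    tendsto_atTop_add_const_right _ _ (tendsto_id.atTop_mul_const' he')
  have hnonempty : ∃ x : ℤ, x * (e : ℤ) + t ∈ betaSet aj lam :=
    (hbot.eventually (eventually_mem_betaSet aj lam)).exists
  have hbdd : ∃ M : ℤ, ∀ x : ℤ, x * (e : ℤ) + t ∈ betaSet aj lam → x ≤ M := by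
    obtain ⟨M, hM⟩ := eventually_atTop.1 (htop.eventually (eventually_notMem_betaSet aj lam))
    exact ⟨M, fun x hx => le_of_not_ge fun hMx => hM x hMx hx⟩
  obtain ⟨l, hl, hmax⟩ := Int.exists_greatest_of_bdd hbdd hnonempty
  exact ⟨l, fun x => ⟨hmax x, hcore.mem_of_le hl⟩⟩

lemma HasLevels.apply_add_mul (hL : HasLevels e B L) (t q : ℤ) : L (t + e * q) = L t - q := by
  refine eq_of_forall_le_iff fun x => ?_
  rw [le_sub_iff_add_le, ← hL, ← hL]
  ring_nf

lemma HasLevels.mem_iff (hL : HasLevels e B L) {x : ℤ} : x ∈ B ↔ 0 ≤ L x := by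
  simpa using hL 0 x

lemma HasLevels.sub_congr (hL : HasLevels e B L) {B' : Set ℤ} {L' : ℤ → ℤ}
    (hL' : HasLevels e B' L') {t t' : ℤ} (h : t ≡ t' [ZMOD e]) : L t - L' t = L t' - L' t' := by
  obtain ⟨q, rfl⟩ := Int.modEq_iff_add_fac.1 h
  rw [hL.apply_add_mul, hL'.apply_add_mul]
  ring

lemma HasLevels.level_eq {aj : ℤ} {lam : PartitionFun} (hL : HasLevels e (betaSet aj lam) L)
    (i : ℕ) : level e aj lam i = L i :=
  IsGreatest.csSup_eq ⟨(hL _ _).2 le_rfl, fun x hx => (hL x i).1 hx⟩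

lemma HasLevels.mul_add_eq_iff (he : 0 < e) (hL : HasLevels e B L) {x t l d : ℤ} :
    x * e + t = (L l + d) * e + l ↔ t ≡ l [ZMOD e] ∧ x = L t + d := by
  have he' : (e : ℤ) ≠ 0 := by exact_mod_cast he.ne'
  have hlevel : t ≡ l [ZMOD e] → (x * e + t = (L l + d) * e + l ↔ x = L t + d) := by
    intro h
    obtain ⟨q, rfl⟩ := Int.modEq_iff_add_fac.1 h
    rw [hL.apply_add_mul]
    exact ⟨fun heq => mul_right_cancel₀ he' (by linear_combination heq), by rintro rfl; ring⟩
  refine ⟨fun h => ?_, fun h => (hlevel h.1).2 h.2⟩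
  have hmod : t ≡ l [ZMOD e] :=
    Int.modEq_iff_add_fac.2 ⟨x - (L l + d), by linear_combination -h⟩
  exact ⟨hmod, (hlevel hmod).1 h⟩

lemma HasLevels.moveBead_eq (hL : HasLevels e B L) (i l : ℕ) :
    moveBead e i l B = insert ((L l + 1) * e + l) (B \ {L i * e + i}) := by
  have hlast : IsGreatest {x : ℤ | x % (e : ℤ) = (i : ℤ) % e ∧ x ∈ B} (L i * e + i) := by
    refine ⟨⟨by simp, (hL _ _).2 le_rfl⟩, ?_⟩
    rintro x ⟨hx, hmem⟩
    obtain ⟨q, rfl⟩ := Int.modEq_iff_add_fac.1 (Int.ModEq.symm hx)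
    rw [add_comm, mul_comm, hL] at hmem
    nlinarith
  have hfree : IsLeast {x : ℤ | x % (e : ℤ) = (l : ℤ) % e ∧ x ∉ B} ((L l + 1) * e + l) := by
    refine ⟨⟨by simp, by rw [hL]; omega⟩, ?_⟩
    rintro x ⟨hx, hmem⟩
    obtain ⟨q, rfl⟩ := Int.modEq_iff_add_fac.1 (Int.ModEq.symm hx)
    rw [add_comm, mul_comm, hL] at hmem
    nlinarith
  unfold moveBead
  rw [hlast.csSup_eq, hfree.csInf_eq]

lemma HasLevels.moveBead (he : 0 < e) (hL : HasLevels e B L) {i l : ℕ}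
    (hil : ¬ (i : ℤ) ≡ l [ZMOD e]) :
    HasLevels e (moveBead e i l B) (L - runnerIndicator e i + runnerIndicator e l) := by
  intro x t
  have hinsert := hL.mul_add_eq_iff he (x := x) (t := t) (l := l) (d := 1)
  have hremove := hL.mul_add_eq_iff he (x := x) (t := t) (l := i) (d := 0)
  rw [add_zero, add_zero] at hremove
  rw [hL.moveBead_eq, Set.mem_insert_iff, Set.mem_sdiff, Set.mem_singleton_iff, hinsert, hremove,
    hL]
  simp only [Pi.add_apply, Pi.sub_apply, runnerIndicator]
  by_cases hi : t ≡ i [ZMOD e]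
  · have hl : ¬ t ≡ l [ZMOD e] := fun hl => hil (hi.symm.trans hl)
    simp only [hi, hl, true_and, false_and, false_or, if_true, if_false]
    omega
  · by_cases hl : t ≡ l [ZMOD e] <;>
      simp only [hi, hl, true_and, false_and, false_or, not_false_eq_true, and_true, if_true,
        if_false] <;> omega

lemma ncard_setOf_emod_eq {α : Type*} (he : 0 < e) {S : Set α} {f : α → ℤ} (hf : Set.InjOn f S)
    (s : ℤ) :
    {p | p ∈ S ∧ f p % (e : ℤ) = s % e}.ncard = {y : ℤ | y * e + s ∈ f '' S}.ncard := by
  have he' : (e : ℤ) ≠ 0 := by exact_mod_cast he.ne'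
  have hinj : Function.Injective fun y : ℤ => y * e + s := fun y z h =>
    mul_right_cancel₀ he' (add_right_cancel h)
  have himage : f '' {p | p ∈ S ∧ f p % (e : ℤ) = s % e} =
      (fun y : ℤ => y * e + s) '' {y | y * e + s ∈ f '' S} := by
    ext x
    constructor
    · rintro ⟨p, ⟨hp, hmod⟩, rfl⟩
      obtain ⟨q, hq⟩ := Int.modEq_iff_add_fac.1 (Int.ModEq.symm hmod)
      have hfp : q * e + s = f p := by linear_combination -hq
      exact ⟨q, ⟨p, hp, hfp.symm⟩, hfp⟩
    · rintro ⟨y, ⟨p, hp, hfp⟩, rfl⟩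
      exact ⟨p, ⟨hp, by simp [hfp]⟩, hfp⟩
  rw [← Set.ncard_image_of_injective _ hinj, ← himage]
  exact (hf.mono fun p hp => hp.1).ncard_image.symm

variable {r : ℕ} {a : Fin r → ℤ} {lam : Multipartition r} {j : Fin r}

lemma HasLevels.removableCount_eq (he : 0 < e) (hL : HasLevels e (betaSet (a j) (lam j)) L)
    (s : ℤ) : removableCount e a lam s j = (L s - L (s - 1)).toNat := by
  have hset : {y : ℤ | y * e + s ∈ content (a j) '' {p | (lam j).Removable p.1 p.2}} =
      (Finset.Ioc (L (s - 1)) (L s) : Set ℤ) := by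
    ext y
    rw [image_content_removable, Finset.coe_Ioc, Set.mem_Ioc, and_comm]
    simp only [Set.mem_ofPred_eq, add_sub_assoc, hL y, not_le]
  rw [← Int.card_Ioc, ← Set.ncard_coe_finset, ← hset,
    ← ncard_setOf_emod_eq he (injOn_content_removable (a j) (lam j))]
  rfl

lemma HasLevels.addableCount_eq (he : 0 < e) (hL : HasLevels e (betaSet (a j) (lam j)) L)
    (s : ℤ) : addableCount e a lam s j = (L (s - 1) - L s).toNat := by
  have hset : {y : ℤ | y * e + s ∈ content (a j) '' {p | (lam j).Addable p.1 p.2}} =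
      (Finset.Ioc (L s) (L (s - 1)) : Set ℤ) := by
    ext y
    rw [image_content_addable, Finset.coe_Ioc, Set.mem_Ioc, and_comm]
    simp only [Set.mem_ofPred_eq, add_sub_assoc, hL y, not_le]
  rw [← Int.card_Ioc, ← Set.ncard_coe_finset, ← hset,
    ← ncard_setOf_emod_eq he (injOn_content_addable (a j) (lam j))]
  rfl

lemma HasLevels.delta_eq (he : 0 < e) (hL : HasLevels e (betaSet (a j) (lam j)) L) (s : ℤ) :
    delta e a lam s j = L s - L (s - 1) := by
  rw [delta, hL.removableCount_eq he, hL.addableCount_eq he, ← neg_sub (L s)]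
  exact Int.toNat_sub_toNat_neg _

end Levels

section NodeCount

open Filter Finset

variable {e : ℕ}

lemma card_filter_range_add_emod_eq (he : 0 < e) (A s : ℤ) (n : ℕ) :
    (#((range n).filter fun c : ℕ => (A + (c : ℤ)) % (e : ℤ) = s % e) : ℤ) =
      (A + n - 1 - s) / e - (A - 1 - s) / e := by
  have himage : ((range n).filter fun c : ℕ => (A + (c : ℤ)) % (e : ℤ) = s % e).image
      (fun c : ℕ => A + (c : ℤ)) =
      {x ∈ Ioc (A - 1) (A + n - 1) | x ≡ s [ZMOD e]} := by
    ext x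
    simp only [mem_image, mem_filter, mem_range, mem_Ioc]
    constructor
    · rintro ⟨c, ⟨hc, hmod⟩, rfl⟩
      exact ⟨⟨by omega, by omega⟩, hmod⟩
    · rintro ⟨⟨hlo, hhi⟩, hmod⟩
      have hx : A + ((x - A).toNat : ℤ) = x := by omega
      exact ⟨(x - A).toNat, ⟨by omega, by rwa [hx]⟩, hx⟩
  have hinj : Function.Injective fun c : ℕ => A + (c : ℤ) := fun c d h => by simpa using h
  have hle : (A - 1 - s) / (e : ℤ) ≤ (A + n - 1 - s) / e :=
    Int.ediv_le_ediv (by exact_mod_cast he) (by omega)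
  rw [← card_image_of_injective _ hinj, himage,
    Int.Ioc_filter_modEq_card _ _ (by exact_mod_cast he)]
  simp only [← Int.cast_sub, Int.cast_natCast, Rat.floor_intCast_div_natCast]
  exact max_eq_left (sub_nonneg.2 hle)

lemma coe_image_bead_range {aj : ℤ} {lam : PartitionFun} {K : ℕ}
    (hK : ∀ b, K ≤ b → lam.part b = 0) :
    ((range K).image (bead aj lam) : Set ℤ) = betaSet aj lam ∩ Set.Ici (aj - K) := by
  ext x
  rw [← range_bead]
  simp only [coe_image, coe_range, Set.mem_image, Set.mem_Iio, Set.mem_inter_iff, Set.mem_range,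
    Set.mem_Ici]
  constructor
  · rintro ⟨b, hb, rfl⟩
    exact ⟨⟨b, rfl⟩, by unfold bead; omega⟩
  · rintro ⟨⟨b, rfl⟩, hle⟩
    refine ⟨b, ?_, rfl⟩
    by_contra hb
    have := hK b (by omega)
    unfold bead at hle
    omega

lemma eventually_sum_bead_eq_of_betaSet_eq {aj : ℤ} {lam lam' : PartitionFun} {β β' : ℤ}
    (hβ : β ∈ betaSet aj lam) (hβ' : β' ∉ betaSet aj lam)
    (h : betaSet aj lam' = insert β' (betaSet aj lam \ {β})) :
    ∀ᶠ K : ℕ in atTop, ∀ g : ℤ → ℤ,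
      ∑ b ∈ range K, g (bead aj lam' b) = ∑ b ∈ range K, g (bead aj lam b) - g β + g β' := by
  filter_upwards [lam.eventually_forall_part_eq_zero, lam'.eventually_forall_part_eq_zero,
    eventually_ge_atTop (aj - β).toNat, eventually_ge_atTop (aj - β').toNat]
    with K hlam hlam' hKβ hKβ' g
  have hmem : β ∈ (range K).image (bead aj lam) := by
    rw [← mem_coe, coe_image_bead_range hlam]
    exact ⟨hβ, Set.mem_Ici.2 (by omega)⟩
  have hnotMem : β' ∉ ((range K).image (bead aj lam)).erase β := by
    intro hmem'
    rw [mem_erase, ← mem_coe, coe_image_bead_range hlam] at hmem'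
    exact hβ' hmem'.2.1
  have himage : (range K).image (bead aj lam') =
      insert β' (((range K).image (bead aj lam)).erase β) := by
    apply coe_injective
    rw [coe_insert, coe_erase, coe_image_bead_range hlam, coe_image_bead_range hlam', h,
      Set.insert_inter_of_mem (Set.mem_Ici.2 (by omega)), Set.inter_sdiff_right_comm]
  have hsum (mu : PartitionFun) :
      ∑ b ∈ range K, g (bead aj mu b) = ∑ x ∈ (range K).image (bead aj mu), g x :=
    (sum_image (bead_strictAnti aj mu).injective.injOn).symm
  rw [hsum, hsum, himage, sum_insert hnotMem, ← add_sum_erase _ _ hmem]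
  ring

lemma eventually_nodeCount_eq {r : ℕ} (he : 0 < e) (a : Fin r → ℤ) (lam : Multipartition r) :
    ∀ᶠ K : ℕ in atTop, ∀ s : ℤ, (nodeCount e a lam s : ℤ) =
      ∑ j, (∑ b ∈ range K, (bead (a j) (lam j) b - s) / (e : ℤ) -
        ∑ b ∈ range K, (a j - b - 1 - s) / (e : ℤ)) := by
  filter_upwards [eventually_all.2 fun j => (lam j).eventually_forall_part_eq_zero] with K hK s
  let nodes : Finset (Σ _ : Fin r, Σ _ : ℕ, ℕ) := univ.sigma fun j => (range K).sigma fun b =>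
    (range ((lam j).part b)).filter fun c => (a j - (b : ℤ) + (c : ℤ)) % (e : ℤ) = s % e
  let toNode : (Σ _ : Fin r, Σ _ : ℕ, ℕ) → Node r := fun x => (x.2.1, x.2.2, x.1)
  have hinj : Function.Injective toNode := by
    rintro ⟨j, b, c⟩ ⟨j', b', c'⟩ h
    obtain ⟨rfl, rfl, rfl⟩ : b = b' ∧ c = c' ∧ j = j' := by simpa [toNode] using h
    rfl
  have himage : {x : Node r | (lam x.2.2).InDiag x.1 x.2.1 ∧
      (a x.2.2 + (x.2.1 : ℤ) - (x.1 : ℤ)) % (e : ℤ) = s % e} = (nodes.image toNode : Set _) := by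
    ext ⟨b, c, j⟩
    have hb (hc : c < (lam j).part b) : b < K := by
      by_contra hb
      have := hK j b (not_lt.1 hb)
      omega
    suffices c < (lam j).part b ∧ (a j + c - b) % (e : ℤ) = s % e ↔
        b < K ∧ c < (lam j).part b ∧ (a j - b + c) % (e : ℤ) = s % e by
      simpa [nodes, toNode, PartitionFun.InDiag]
    rw [add_sub_right_comm]
    tauto
  rw [nodeCount, himage, Set.ncard_coe_finset, card_image_of_injective _ hinj]
  simp only [nodes, card_sigma]
  push_cast
  refine sum_congr rfl fun j _ => ?_
  rw [← sum_sub_distrib]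
  refine sum_congr rfl fun b _ => ?_
  rw [card_filter_range_add_emod_eq he]
  unfold bead
  ring_nf

end NodeCount

section Swap

open Filter Finset

variable {e r : ℕ} {a : Fin r → ℤ} {m m' : Multipartition r} {i l : ℕ} {j k : Fin r}

lemma IsSwap.betaSet_left (hs : IsSwap e a i l j k m m') (hjk : j ≠ k) :
    betaSet (a j) (m' j) = moveBead e i l (betaSet (a j) (m j)) := by
  simpa [swapSets, hjk] using hs j

lemma IsSwap.betaSet_right (hs : IsSwap e a i l j k m m') (hjk : j ≠ k) :
    betaSet (a k) (m' k) = moveBead e l i (betaSet (a k) (m k)) := by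
  simpa [swapSets, hjk.symm] using hs k

lemma IsSwap.apply_of_ne (hs : IsSwap e a i l j k m m') {j' : Fin r} (hj : j' ≠ j) (hk : j' ≠ k) :
    m' j' = m j' :=
  betaSet_injective (a j') (by simpa [swapSets, hj, hk] using hs j')

lemma IsSwap.swap_indices (hs : IsSwap e a i l j k m m') (hjk : j ≠ k) :
    IsSwap e a l i k j m m' := by
  intro j'
  obtain rfl | hj := eq_or_ne j' j
  · simpa [swapSets, hjk] using hs.betaSet_left hjk
  obtain rfl | hk := eq_or_ne j' k
  · simpa [swapSets, hj] using hs.betaSet_right hjk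
  · simp [swapSets, hj, hk, hs.apply_of_ne hj hk]

lemma IsSwap.eq_of_same_component (he : 0 < e) (hm : IsMulticore e a m)
    (hil : ¬ (i : ℤ) ≡ l [ZMOD e]) (hs : IsSwap e a i l j j m m') : m' = m := by
  funext j'
  obtain rfl | hj := eq_or_ne j' j
  · obtain ⟨L, hL⟩ := exists_hasLevels he (hm j')
    have hback := (hL.moveBead he hil).moveBead he fun h => hil h.symm
    rw [add_sub_cancel_right, sub_add_cancel] at hback
    have hbeta : betaSet (a j') (m' j') =
        moveBead e l i (moveBead e i l (betaSet (a j') (m j'))) := by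
      simpa [swapSets] using hs j'
    refine betaSet_injective (a j') (Set.ext fun x => ?_)
    rw [hbeta, hback.mem_iff, hL.mem_iff]
  · exact hs.apply_of_ne hj hj

lemma HasLevels.eventually_sum_bead_sub_ediv {aj : ℤ} {lam lam' : PartitionFun} {L : ℤ → ℤ}
    (he : 0 < e) (hL : HasLevels e (betaSet aj lam) L)
    (h : betaSet aj lam' = AK.moveBead e i l (betaSet aj lam)) :
    ∀ᶠ K : ℕ in atTop, ∀ s : ℤ,
      ∑ b ∈ range K, (bead aj lam' b - s) / (e : ℤ) = ∑ b ∈ range K, (bead aj lam b - s) / (e : ℤ) -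
        (L i + (i - s) / e) + (L l + 1 + (l - s) / e) := by
  rw [hL.moveBead_eq] at h
  have hlast : L i * e + i ∈ betaSet aj lam := (hL _ _).2 le_rfl
  have hfree : (L l + 1) * e + l ∉ betaSet aj lam := by rw [hL]; omega
  have hdiv (x t s : ℤ) : (x * e + t - s) / (e : ℤ) = x + (t - s) / e := by
    rw [add_sub_assoc, Int.mul_add_ediv_right _ _ (by exact_mod_cast he.ne')]
  filter_upwards [eventually_sum_bead_eq_of_betaSet_eq hlast hfree h] with K hK s
  rw [hK fun x => (x - s) / (e : ℤ), hdiv, hdiv]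

lemma HasLevels.gammaD_eq {Lj Lk : ℤ → ℤ} (hLj : HasLevels e (betaSet (a j) (m j)) Lj)
    (hLk : HasLevels e (betaSet (a k) (m k)) Lk) :
    gammaD e a m i l j k = Lj i - Lk i - (Lj l - Lk l) := by
  rw [gammaD, gamma, gamma, hLj.level_eq, hLj.level_eq, hLk.level_eq, hLk.level_eq]

lemma gammaD_comm : gammaD e a m l i k j = gammaD e a m i l j k := by
  unfold gammaD gamma
  ring

lemma IsSwap.nodeCount_eq (he : 0 < e) (hm : IsMulticore e a m) (hjk : j ≠ k)
    (hs : IsSwap e a i l j k m m') (s : ℤ) :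
    (nodeCount e a m s : ℤ) = nodeCount e a m' s + (gammaD e a m i l j k - 2) := by
  obtain ⟨Lj, hLj⟩ := exists_hasLevels he (hm j)
  obtain ⟨Lk, hLk⟩ := exists_hasLevels he (hm k)
  obtain ⟨K, hcount, hcount', hsumj, hsumk⟩ := ((eventually_nodeCount_eq he a m).and <|
    (eventually_nodeCount_eq he a m').and <|
    (hLj.eventually_sum_bead_sub_ediv he (hs.betaSet_left hjk)).and <|
    hLk.eventually_sum_bead_sub_ediv he (hs.betaSet_right hjk)).exists
  rw [← sub_eq_iff_eq_add', hcount, hcount', ← sum_sub_distrib, sum_eq_add j k hjk, hsumj, hsumk,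
    hLj.gammaD_eq hLk]
  · ring
  · rintro j' - ⟨hj, hk⟩
    rw [hs.apply_of_ne hj hk, sub_self]
  · simp
  · simp

lemma weight_eq_add_mul {g : ℤ}
    (h : ∀ s, (nodeCount e a m s : ℤ) = nodeCount e a m' s + g) :
    weight e a m = weight e a m' + r * g := by
  have hcast (s : ℤ) : (nodeCount e a m s : ℚ) = nodeCount e a m' s + g := by exact_mod_cast h s
  simp only [weight, hcast, add_sub_add_right_eq_sub, sum_add_distrib, sum_const, card_univ,
    Fintype.card_fin, nsmul_eq_mul]
  ring

lemma IsSwap.weight_eq (he : 0 < e) (hm : IsMulticore e a m) (hjk : j ≠ k)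
    (hs : IsSwap e a i l j k m m') :
    weight e a m = weight e a m' + r * (gammaD e a m i l j k - 2 : ℤ) :=
  weight_eq_add_mul (hs.nodeCount_eq he hm hjk)

lemma IsSwap.delta_left (he : 0 < e) (hm : IsMulticore e a m) (hil : ¬ (i : ℤ) ≡ l [ZMOD e])
    (hjk : j ≠ k) (hs : IsSwap e a i l j k m m') (s : ℤ) :
    delta e a m' s j = delta e a m s j - runnerIndicator e i s + runnerIndicator e l s +
      runnerIndicator e i (s - 1) - runnerIndicator e l (s - 1) := by
  obtain ⟨L, hL⟩ := exists_hasLevels he (hm j)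
  have hL' := hL.moveBead he hil
  rw [← hs.betaSet_left hjk] at hL'
  rw [hL'.delta_eq he, hL.delta_eq he]
  simp only [Pi.add_apply, Pi.sub_apply]
  ring

lemma delta_eq_add_gammaD (he : 0 < e) (hm : IsMulticore e a m) {s : ℤ} (hl : s ≡ l [ZMOD e])
    (hi : s - 1 ≡ i [ZMOD e]) : delta e a m s k = delta e a m s j + gammaD e a m i l j k := by
  obtain ⟨Lj, hLj⟩ := exists_hasLevels he (hm j)
  obtain ⟨Lk, hLk⟩ := exists_hasLevels he (hm k)
  rw [hLj.delta_eq he, hLk.delta_eq he, hLj.gammaD_eq hLk, ← hLj.sub_congr hLk hl,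
    ← hLj.sub_congr hLk hi]
  ring

lemma dmin_le_delta (e : ℕ) (a : Fin r → ℤ) (m : Multipartition r) (s : ℤ) (j : Fin r) :
    dmin e a m s ≤ delta e a m s j :=
  ciInf_le (Set.finite_range (delta e a m s)).bddBelow j

lemma IsSwap.dmin_le_delta_left_add (he : 0 < e) (hm : IsMulticore e a m)
    (hil : ¬ (i : ℤ) ≡ l [ZMOD e]) (hjk : j ≠ k) (hs : IsSwap e a i l j k m m')
    (hγ : 2 < gammaD e a m i l j k) (s : ℤ) :
    dmin e a m' s ≤ delta e a m s j + (gammaD e a m i l j k - 2) := by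
  by_cases h : s ≡ l [ZMOD e] ∧ s - 1 ≡ i [ZMOD e]
  · obtain ⟨hl, hi⟩ := h
    have hil' : ¬ (l : ℤ) ≡ i [ZMOD e] := fun h => hil h.symm
    have hi' : ¬ s ≡ i [ZMOD e] := fun h => hil (h.symm.trans hl)
    have hl' : ¬ s - 1 ≡ l [ZMOD e] := fun h => hil (hi.symm.trans h)
    calc dmin e a m' s ≤ delta e a m' s k := dmin_le_delta e a m' s k
      _ = delta e a m s k - 2 := by
        rw [(hs.swap_indices hjk).delta_left he hm hil' hjk.symm]
        simp only [runnerIndicator, hl, hi, hl', hi', if_true, if_false]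
        ring
      _ = delta e a m s j + (gammaD e a m i l j k - 2) := by
        rw [delta_eq_add_gammaD he hm hl hi, add_sub_assoc]
  · have hgrow : delta e a m' s j ≤ delta e a m s j + 1 := by
      rw [hs.delta_left he hm hil hjk]
      unfold runnerIndicator
      split_ifs <;> first | omega | exact absurd ⟨‹_›, ‹_›⟩ h
    have := dmin_le_delta e a m' s j
    omega

lemma IsSwap.dmin_le_dmin_add (he : 0 < e) (hm : IsMulticore e a m)
    (hil : ¬ (i : ℤ) ≡ l [ZMOD e]) (hjk : j ≠ k) (hs : IsSwap e a i l j k m m')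
    (hγ : 2 < gammaD e a m i l j k) (s : ℤ) :
    dmin e a m' s ≤ dmin e a m s + (gammaD e a m i l j k - 2) := by
  have : Nonempty (Fin r) := ⟨j⟩
  rw [← sub_le_iff_le_add]
  refine le_ciInf (f := delta e a m s) fun j' => sub_le_iff_le_add.2 ?_
  obtain rfl | hj := eq_or_ne j' j
  · exact hs.dmin_le_delta_left_add he hm hil hjk hγ s
  obtain rfl | hk := eq_or_ne j' k
  · rw [← gammaD_comm] at hγ ⊢
    exact (hs.swap_indices hjk).dmin_le_delta_left_add he hm (fun h => hil h.symm) hjk.symm hγ s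
  · have hδ : delta e a m' s j' = delta e a m s j' := by
      simp only [delta, removableCount, addableCount, hs.apply_of_ne hj hk]
    have := dmin_le_delta e a m' s j'
    omega

lemma IsSwap.weight_add_mul_dmin_le (he : 0 < e) (hm : IsMulticore e a m)
    (hil : ¬ (i : ℤ) ≡ l [ZMOD e]) (hs : IsSwap e a i l j k m m')
    (hlt : weight e a m' < weight e a m) (s : ℤ) :
    weight e a m' + r * dmin e a m' s ≤ weight e a m + r * dmin e a m s := by
  have hjk : j ≠ k := by
    rintro rfl
    exact hlt.ne (congrArg _ (hs.eq_of_same_component he hm hil))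
  have hw := hs.weight_eq he hm hjk
  have hγ : 2 < gammaD e a m i l j k := by
    rw [hw, lt_add_iff_pos_right] at hlt
    exact sub_pos.1 (by exact_mod_cast pos_of_mul_pos_right hlt r.cast_nonneg)
  have hd : (dmin e a m' s : ℚ) ≤ dmin e a m s + (gammaD e a m i l j k - 2 : ℤ) := by
    exact_mod_cast hs.dmin_le_dmin_add he hm hil hjk hγ s
  calc weight e a m' + r * dmin e a m' s
      ≤ weight e a m' + r * (dmin e a m s + (gammaD e a m i l j k - 2 : ℤ)) := by gcongr
    _ = weight e a m + r * dmin e a m s := by rw [hw]; ring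

end Swap

/-- Lemma 4.7: if `m = m_0, …, m_v` is a sequence of multicores with
`m_{t+1} = s^{jk}_{il}(m_t)` and strictly decreasing weights, and
`w(m) = w(m_v) + h·r` with `h > 0`, then `d_ī(m) ≥ d_ī(m_v) − h`. -/
theorem stmt_6 {e r : ℕ} (he : 2 ≤ e) (hr : 0 < r) (a : Fin r → ℤ)
    (m : Multipartition r) (hcore : IsMulticore e a m)
    (v : ℕ) (seq : ℕ → Multipartition r) (h0 : seq 0 = m)
    (hmc : ∀ t ≤ v, IsMulticore e a (seq t))
    (hstep : ∀ t < v, ∃ (i l : ℕ) (j k : Fin r), i < e ∧ l < e ∧ i ≠ l ∧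
      IsSwap e a i l j k (seq t) (seq (t + 1)))
    (hdec : ∀ t < v, weight e a (seq (t + 1)) < weight e a (seq t))
    (h : ℤ) (hh : 0 < h)
    (hw : weight e a m = weight e a (seq v) + (h : ℚ) * (r : ℚ))
    (ibar : ℤ) :
    dmin e a m ibar ≥ dmin e a (seq v) ibar - h := by
  have hanti : AntitoneOn (fun t => weight e a (seq t) + r * dmin e a (seq t) ibar)
      (Set.Iic v) := by
    refine antitoneOn_of_add_one_le Set.ordConnected_Iic fun t _ _ (ht : t < v) => ?_
    obtain ⟨i, l, j, k, hi, hl, hil, hs⟩ := hstep t ht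
    have hmod : ¬ (i : ℤ) ≡ l [ZMOD e] := fun h =>
      hil ((Int.natCast_modEq_iff.1 h).eq_of_lt_of_lt hi hl)
    exact hs.weight_add_mul_dmin_le (by omega) (hmc t ht.le) hmod (hdec t ht) ibar
  have hle := hanti (Set.mem_Iic.2 v.zero_le) (Set.mem_Iic.2 le_rfl) v.zero_le
  simp only [h0, hw] at hle
  have hr' : (0 : ℚ) < r := by exact_mod_cast hr
  have hd : (dmin e a (seq v) ibar : ℚ) ≤ dmin e a m ibar + h :=
    le_of_mul_le_mul_left (by linarith) hr'
  exact sub_le_iff_le_add.2 (by exact_mod_cast hd)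

end AK
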